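/- arXiv:1902.08519 — 5 statements merged into one kernel-verified Lean document; each statement's English description precedes it below -/
import Mathlib

section
/- For all real numbers u, v, a, b, c, setting Ω² = 4/((1+u²)(1+v²)), the quadratic expression Q := (1/8)·Ω²·((2+u²+v²)² − 1)·a² + (1/4)·Ω²·(2+u²+v²)·(u²−v²)·a·b + (u²−v²)²·b² + b² + c² satisfies Q ≥ (1/8)·Ω²·(a² + b² + c²). -/
/-!
Write `ω = Ω²`, `s = 2 + u² + v²`, `d = u² - v²`, so that `0 ≤ ω ≤ 4` and `s² ≥ 4`. Completing the
square in the mixed term `(ω/4) s d a b` costs `(ω/4) d² b²`, which the term `d² b²` pays for since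
`ω ≤ 4`, and half of the coefficient of `s² a²`, which leaves enough `a²` since `s² ≥ 4`. The
remaining `b² + c²` dominates `(ω/8) (b² + c²)`, again because `ω ≤ 4`.
-/

section

variable {K : Type*} [Field K] [LinearOrder K] [IsStrictOrderedRing K]

lemma conformalFactor_sq_le_four (u v : K) : 4 / ((1 + u ^ 2) * (1 + v ^ 2)) ≤ 4 :=
  div_le_self zero_le_four <| one_le_mul_of_one_le_of_one_le
    (le_add_of_nonneg_right (sq_nonneg u)) (le_add_of_nonneg_right (sq_nonneg v))

lemma four_le_two_add_sq_add_sq_sq (u v : K) : 4 ≤ (2 + u ^ 2 + v ^ 2) ^ 2 := by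
  have two_le : 2 ≤ 2 + u ^ 2 + v ^ 2 := by linarith [sq_nonneg u, sq_nonneg v]
  calc (4 : K) = 2 ^ 2 := by norm_num
    _ ≤ (2 + u ^ 2 + v ^ 2) ^ 2 := by gcongr

lemma time_sq_le_time_radial_form {ω s : K} (hω : 0 ≤ ω) (hω4 : ω ≤ 4) (hs : 4 ≤ s ^ 2)
    (d a b : K) :
    (1 / 8) * ω * a ^ 2 ≤
      (1 / 8) * ω * (s ^ 2 - 1) * a ^ 2 + (1 / 4) * ω * s * d * (a * b) + d ^ 2 * b ^ 2 := by
  have complete_square :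
      (1 / 8) * ω * (s ^ 2 - 1) * a ^ 2 + (1 / 4) * ω * s * d * (a * b) + d ^ 2 * b ^ 2 =
        (1 / 8) * ω * a ^ 2 + (ω / 4 * (s / 2 * a + d * b) ^ 2 + ω / 16 * (s ^ 2 - 4) * a ^ 2
          + (1 - ω / 4) * (d * b) ^ 2) := by
    ring
  have square_nonneg : 0 ≤ ω / 4 * (s / 2 * a + d * b) ^ 2 := by positivity
  have time_remainder_nonneg : 0 ≤ ω / 16 * (s ^ 2 - 4) * a ^ 2 :=
    mul_nonneg (mul_nonneg (by positivity) (sub_nonneg.mpr hs)) (sq_nonneg a)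
  have radial_remainder_nonneg : 0 ≤ (1 - ω / 4) * (d * b) ^ 2 :=
    mul_nonneg (by linarith) (sq_nonneg (d * b))
  rw [complete_square]
  linarith

theorem cronstrom_quadratic_lower_bound_general {ω s : K} (hω : 0 ≤ ω) (hω4 : ω ≤ 4)
    (hs : 4 ≤ s ^ 2) (d a b c : K) :
    (1 / 8) * ω * (a ^ 2 + b ^ 2 + c ^ 2) ≤
      (1 / 8) * ω * (s ^ 2 - 1) * a ^ 2 + (1 / 4) * ω * s * d * (a * b)
        + d ^ 2 * b ^ 2 + b ^ 2 + c ^ 2 := by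
  have weight_le_one : (1 / 8) * ω ≤ 1 := by linarith
  calc (1 / 8) * ω * (a ^ 2 + b ^ 2 + c ^ 2)
      = (1 / 8) * ω * a ^ 2 + (1 / 8) * ω * b ^ 2 + (1 / 8) * ω * c ^ 2 := by ring
    _ ≤ (1 / 8) * ω * (s ^ 2 - 1) * a ^ 2 + (1 / 4) * ω * s * d * (a * b)
        + d ^ 2 * b ^ 2 + b ^ 2 + c ^ 2 := by
      gcongr ?_ + ?_ + ?_
      · exact time_sq_le_time_radial_form hω hω4 hs d a b
      · exact mul_le_of_le_one_left (sq_nonneg b) weight_le_one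
      · exact mul_le_of_le_one_left (sq_nonneg c) weight_le_one

end

/-- the key algebraic inequality in the Proposition of Section 5:
with `Ω² = 4/((1+u²)(1+v²))`, the quadratic form `Q` (which equals `Ω⁻²|X|²_Γ`)
is bounded below by `(1/8)·Ω²·(a² + b² + c²)`. -/
theorem cronstrom_quadratic_lower_bound (u v a b c : ℝ) :
    (1/8) * (4 / ((1 + u^2) * (1 + v^2))) * ((2 + u^2 + v^2)^2 - 1) * a^2
      + (1/4) * (4 / ((1 + u^2) * (1 + v^2))) * (2 + u^2 + v^2) * (u^2 - v^2) * (a * b)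
      + (u^2 - v^2)^2 * b^2 + b^2 + c^2
    ≥ (1/8) * (4 / ((1 + u^2) * (1 + v^2))) * (a^2 + b^2 + c^2) :=
  cronstrom_quadratic_lower_bound_general (by positivity) (conformalFactor_sq_le_four u v)
    (four_le_two_add_sq_add_sq_sq u v) (u ^ 2 - v ^ 2) a b c
end

section
/- For every R > 0 there exist constants 0 < c₁ ≤ c₂ such that for all real u, v with |u| ≤ R and |v| ≤ R and all real a, b, c, setting Ω² = 4/((1+u²)(1+v²)), the quadratic expression Q := (1/8)·Ω²·((2+u²+v²)² − 1)·a² + (1/4)·Ω²·(2+u²+v²)·(u²−v²)·a·b + (u²−v²)²·b² + b² + c² satisfies c₁·(a² + b² + c²) ≤ Q ≤ c₂·(a² + b² + c²). -/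
/-!
Write `s = 2 + u² + v²` and `d = u² - v²`. Completing a square gives
`Q = (d b + Ω² s a / 8)² + (Ω² (s² - 1) / 8 - (Ω² s / 8)²) a² + b² + c²`. The identity
`s² - d² = 4 (1 + u²) (1 + v²)` reads `Ω² s² = 16 + Ω² d²`; as `0 < Ω² ≤ 4`, this yields
`16 ≤ Ω² s² ≤ 16 + 4 d²`. The first inequality keeps the coefficient of `a²` at least `1 / 2`
everywhere; by the second, all coefficients are controlled from above by `d²` alone.
-/

theorem abs_sq_sub_sq_le {α : Type*} [Ring α] [LinearOrder α] [IsStrictOrderedRing α]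
    {R u v : α} (hu : |u| ≤ R) (hv : |v| ≤ R) : |u ^ 2 - v ^ 2| ≤ R ^ 2 :=
  abs_sub_le_of_nonneg_of_le (sq_nonneg u) (sq_le_sq.mpr (hu.trans (le_abs_self R)))
    (sq_nonneg v) (sq_le_sq.mpr (hv.trans (le_abs_self R)))

section NormComparison

variable {𝕜 : Type*} [Field 𝕜]

/-- The square `Ω²` of the conformal factor relating Minkowski space to the Einstein cylinder, in
the null coordinates `u = t - r` and `v = t + r`. -/
def conformalFactorSq (u v : 𝕜) : 𝕜 :=
  4 / ((1 + u ^ 2) * (1 + v ^ 2))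

/-- The rescaled squared Minkowskian norm `Q = Ω⁻²|X|²_Γ` of a 1-form `X` at the point with null
coordinates `u`, `v`, in terms of its components `a = X(∂_τ)` and `b = X(∂_ζ)` and of its angular
part, which enters as `c²`. -/
def rescaledGammaNormSq (u v a b c : 𝕜) : 𝕜 :=
  (1 / 8) * conformalFactorSq u v * ((2 + u ^ 2 + v ^ 2) ^ 2 - 1) * a ^ 2
    + (1 / 4) * conformalFactorSq u v * (2 + u ^ 2 + v ^ 2) * (u ^ 2 - v ^ 2) * (a * b)
    + (u ^ 2 - v ^ 2) ^ 2 * b ^ 2 + b ^ 2 + c ^ 2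

theorem rescaledGammaNormSq_eq_sq_add [CharZero 𝕜] (u v a b c : 𝕜) :
    rescaledGammaNormSq u v a b c =
      ((u ^ 2 - v ^ 2) * b + conformalFactorSq u v * (2 + u ^ 2 + v ^ 2) / 8 * a) ^ 2
        + (conformalFactorSq u v * ((2 + u ^ 2 + v ^ 2) ^ 2 - 1) / 8
            - (conformalFactorSq u v * (2 + u ^ 2 + v ^ 2) / 8) ^ 2) * a ^ 2
        + b ^ 2 + c ^ 2 := by
  unfold rescaledGammaNormSq
  ring

variable [LinearOrder 𝕜] [IsStrictOrderedRing 𝕜]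

theorem conformalFactorSq_pos (u v : 𝕜) : 0 < conformalFactorSq u v := by
  unfold conformalFactorSq
  positivity

theorem conformalFactorSq_le_four (u v : 𝕜) : conformalFactorSq u v ≤ 4 :=
  div_le_self zero_le_four <| one_le_mul_of_one_le_of_one_le
    (le_add_of_nonneg_right (sq_nonneg u)) (le_add_of_nonneg_right (sq_nonneg v))

theorem conformalFactorSq_mul_sq (u v : 𝕜) :
    conformalFactorSq u v * (2 + u ^ 2 + v ^ 2) ^ 2 =
      16 + conformalFactorSq u v * (u ^ 2 - v ^ 2) ^ 2 := by
  have hu : 1 + u ^ 2 ≠ 0 := by positivity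
  have hv : 1 + v ^ 2 ≠ 0 := by positivity
  unfold conformalFactorSq
  field_simp
  ring

theorem sixteen_le_conformalFactorSq_mul_sq (u v : 𝕜) :
    16 ≤ conformalFactorSq u v * (2 + u ^ 2 + v ^ 2) ^ 2 := by
  rw [conformalFactorSq_mul_sq]
  exact le_add_of_nonneg_right (mul_nonneg (conformalFactorSq_pos u v).le (sq_nonneg _))

theorem conformalFactorSq_mul_sq_le (u v : 𝕜) :
    conformalFactorSq u v * (2 + u ^ 2 + v ^ 2) ^ 2 ≤ 16 + 4 * (u ^ 2 - v ^ 2) ^ 2 := by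
  rw [conformalFactorSq_mul_sq]
  gcongr
  exact conformalFactorSq_le_four u v

theorem sq_conformalFactorSq_mul_div_eight_le (u v : 𝕜) :
    (conformalFactorSq u v * (2 + u ^ 2 + v ^ 2) / 8) ^ 2 ≤
      conformalFactorSq u v * (2 + u ^ 2 + v ^ 2) ^ 2 / 16 := by
  have hΩ := conformalFactorSq_pos u v
  calc (conformalFactorSq u v * (2 + u ^ 2 + v ^ 2) / 8) ^ 2
      = conformalFactorSq u v * (conformalFactorSq u v * (2 + u ^ 2 + v ^ 2) ^ 2) / 64 := by ring
    _ ≤ 4 * (conformalFactorSq u v * (2 + u ^ 2 + v ^ 2) ^ 2) / 64 := by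
        gcongr
        exact conformalFactorSq_le_four u v
    _ = conformalFactorSq u v * (2 + u ^ 2 + v ^ 2) ^ 2 / 16 := by ring

theorem half_le_conformalFactorSq_mul_sub_sq (u v : 𝕜) :
    1 / 2 ≤ conformalFactorSq u v * ((2 + u ^ 2 + v ^ 2) ^ 2 - 1) / 8
      - (conformalFactorSq u v * (2 + u ^ 2 + v ^ 2) / 8) ^ 2 := by
  have four_le_sq : 4 ≤ (2 + u ^ 2 + v ^ 2) ^ 2 := by
    nlinarith [sq_nonneg u, sq_nonneg v]
  have four_mul_le : conformalFactorSq u v * 4 ≤ conformalFactorSq u v * (2 + u ^ 2 + v ^ 2) ^ 2 :=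
    mul_le_mul_of_nonneg_left four_le_sq (conformalFactorSq_pos u v).le
  linarith [sq_conformalFactorSq_mul_div_eight_le u v, sixteen_le_conformalFactorSq_mul_sq u v]

theorem half_mul_le_rescaledGammaNormSq (u v a b c : 𝕜) :
    1 / 2 * (a ^ 2 + b ^ 2 + c ^ 2) ≤ rescaledGammaNormSq u v a b c := by
  rw [rescaledGammaNormSq_eq_sq_add]
  have coeff_a :=
    mul_le_mul_of_nonneg_right (half_le_conformalFactorSq_mul_sub_sq u v) (sq_nonneg a)
  linarith [sq_nonneg b, sq_nonneg c,
    sq_nonneg ((u ^ 2 - v ^ 2) * b + conformalFactorSq u v * (2 + u ^ 2 + v ^ 2) / 8 * a)]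

theorem rescaledGammaNormSq_le (u v a b c : 𝕜) :
    rescaledGammaNormSq u v a b c ≤
      (3 + 2 * (u ^ 2 - v ^ 2) ^ 2) * (a ^ 2 + b ^ 2 + c ^ 2) := by
  have coeff_a : conformalFactorSq u v * ((2 + u ^ 2 + v ^ 2) ^ 2 - 1) / 8
      + (conformalFactorSq u v * (2 + u ^ 2 + v ^ 2) / 8) ^ 2 ≤ 3 + 2 * (u ^ 2 - v ^ 2) ^ 2 := by
    linarith [sq_conformalFactorSq_mul_div_eight_le u v, conformalFactorSq_mul_sq_le u v,
      conformalFactorSq_pos u v, sq_nonneg (u ^ 2 - v ^ 2)]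
  have coeff_b : 2 * (u ^ 2 - v ^ 2) ^ 2 + 1 ≤ 3 + 2 * (u ^ 2 - v ^ 2) ^ 2 := by linarith
  have coeff_c : 1 ≤ 3 + 2 * (u ^ 2 - v ^ 2) ^ 2 := by linarith [sq_nonneg (u ^ 2 - v ^ 2)]
  calc rescaledGammaNormSq u v a b c
      ≤ 2 * (((u ^ 2 - v ^ 2) * b) ^ 2
            + (conformalFactorSq u v * (2 + u ^ 2 + v ^ 2) / 8 * a) ^ 2)
          + (conformalFactorSq u v * ((2 + u ^ 2 + v ^ 2) ^ 2 - 1) / 8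
              - (conformalFactorSq u v * (2 + u ^ 2 + v ^ 2) / 8) ^ 2) * a ^ 2
          + b ^ 2 + c ^ 2 := by
        rw [rescaledGammaNormSq_eq_sq_add]
        gcongr
        exact add_sq_le
    _ = (conformalFactorSq u v * ((2 + u ^ 2 + v ^ 2) ^ 2 - 1) / 8
            + (conformalFactorSq u v * (2 + u ^ 2 + v ^ 2) / 8) ^ 2) * a ^ 2
          + (2 * (u ^ 2 - v ^ 2) ^ 2 + 1) * b ^ 2 + 1 * c ^ 2 := by ring
    _ ≤ (3 + 2 * (u ^ 2 - v ^ 2) ^ 2) * a ^ 2 + (3 + 2 * (u ^ 2 - v ^ 2) ^ 2) * b ^ 2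
          + (3 + 2 * (u ^ 2 - v ^ 2) ^ 2) * c ^ 2 := by gcongr
    _ = (3 + 2 * (u ^ 2 - v ^ 2) ^ 2) * (a ^ 2 + b ^ 2 + c ^ 2) := by ring

-- In terms of time and radius, `u ^ 2 - v ^ 2 = -4 t r`.
theorem gamma_norms_equivalent_on_cone_general :
    ∃ c₁ : 𝕜, 0 < c₁ ∧ ∀ D : 𝕜, ∃ c₂ : 𝕜, c₁ ≤ c₂ ∧
      ∀ u v : 𝕜, |u ^ 2 - v ^ 2| ≤ D → ∀ a b c : 𝕜,
        c₁ * (a ^ 2 + b ^ 2 + c ^ 2) ≤ rescaledGammaNormSq u v a b c ∧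
        rescaledGammaNormSq u v a b c ≤ c₂ * (a ^ 2 + b ^ 2 + c ^ 2) := by
  refine ⟨1 / 2, one_half_pos, fun D ↦ ⟨3 + 2 * D ^ 2, by linarith [sq_nonneg D], ?_⟩⟩
  intro u v hD a b c
  refine ⟨half_mul_le_rescaledGammaNormSq u v a b c, (rescaledGammaNormSq_le u v a b c).trans ?_⟩
  gcongr (3 + 2 * ?_) * _
  exact sq_le_sq.mpr (hD.trans (le_abs_self D))

end NormComparison

/-- on a region where the null coordinates `u, v` are bounded by `R`,
the quadratic form `Q = Ω⁻²|X|²_Γ` is equivalent to `a² + b² + c² = |X|²_Γ̂`. -/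
theorem gamma_norms_equivalent_on_cone (R : ℝ) (hR : 0 < R) :
    ∃ c₁ c₂ : ℝ, 0 < c₁ ∧ c₁ ≤ c₂ ∧
      ∀ u v : ℝ, |u| ≤ R → |v| ≤ R → ∀ a b c : ℝ,
        c₁ * (a^2 + b^2 + c^2) ≤
          (1/8) * (4 / ((1 + u^2) * (1 + v^2))) * ((2 + u^2 + v^2)^2 - 1) * a^2
            + (1/4) * (4 / ((1 + u^2) * (1 + v^2))) * (2 + u^2 + v^2) * (u^2 - v^2) * (a * b)
            + (u^2 - v^2)^2 * b^2 + b^2 + c^2 ∧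
        (1/8) * (4 / ((1 + u^2) * (1 + v^2))) * ((2 + u^2 + v^2)^2 - 1) * a^2
            + (1/4) * (4 / ((1 + u^2) * (1 + v^2))) * (2 + u^2 + v^2) * (u^2 - v^2) * (a * b)
            + (u^2 - v^2)^2 * b^2 + b^2 + c^2 ≤ c₂ * (a^2 + b^2 + c^2) := by
  obtain ⟨c₁, c₁_pos, equivalent⟩ := gamma_norms_equivalent_on_cone_general (𝕜 := ℝ)
  obtain ⟨c₂, c₁_le_c₂, bounds⟩ := equivalent (R ^ 2)
  exact ⟨c₁, c₂, c₁_pos, c₁_le_c₂, fun u v hu hv ↦ bounds u v (abs_sq_sub_sq_le hu hv)⟩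
end

section
/- Let n ∈ ℕ and let A_a : ℝ⁴ → M_n(ℝ), a = 0,1,2,3, be continuously differentiable matrix-valued functions satisfying the Cronström gauge condition ∑_{a=0}^{3} x^a A_a(x) = 0 for all x ∈ ℝ⁴. Define the curvature F_{ab}(x) = ∂_a A_b(x) − ∂_b A_a(x) + [A_a(x), A_b(x)]. Then for every x ∈ ℝ⁴ and every index b, the potential is recovered from its curvature by A_b(x) = ∫₀¹ s · ∑_{a=0}^{3} x^a F_{ab}(sx) ds. -/
open MeasureTheory

attribute [local instance] Matrix.normedAddCommGroup Matrix.normedSpace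

/-- The partial derivative `∂_a A(x)` of a matrix-valued function on `ℝ⁴`. -/
noncomputable def partialD {n : ℕ} (A : (Fin 4 → ℝ) → Matrix (Fin n) (Fin n) ℝ)
    (a : Fin 4) (x : Fin 4 → ℝ) : Matrix (Fin n) (Fin n) ℝ :=
  fderiv ℝ A x (Pi.single a 1)

/-- The curvature `F_{ab} = ∂_a A_b − ∂_b A_a + [A_a, A_b]` of a matrix-valued
Yang–Mills potential `A` on `ℝ⁴`. -/
noncomputable def curvF {n : ℕ} (A : Fin 4 → (Fin 4 → ℝ) → Matrix (Fin n) (Fin n) ℝ)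
    (a b : Fin 4) (x : Fin 4 → ℝ) : Matrix (Fin n) (Fin n) ℝ :=
  partialD (A b) a x - partialD (A a) b x + (A a x * A b x - A b x * A a x)

/-!
Contracting the curvature at `y` with the radial vector `y` kills the commutator, since `A y y = 0`,
and turns `-∂_v A (y)` into `A y v`, by differentiating the gauge condition along `v`. What remains
is `F y (y, v) = ∂_y A (v) + A y v`, which at `y = s x` is the derivative of `s ↦ s A (s x) v`.
Integrating over `[0, 1]` recovers `A x v`.
-/

open scoped Topology

section CoordinateFree

variable {E 𝔤 : Type*} [NormedAddCommGroup E] [NormedSpace ℝ E] [NormedAddCommGroup 𝔤]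
  [NormedSpace ℝ 𝔤]

/-- The curvature `F = dA + ½ [A ∧ A]` of a `𝔤`-valued one-form `A`, at `y` on `u` and `v`. A
bilinear map `B` stands for the Lie bracket, since a type that is both a `LieRing` and a
`NormedAddCommGroup` would carry two additions. -/
noncomputable def gaugeCurvature (B : 𝔤 →ₗ[ℝ] 𝔤 →ₗ[ℝ] 𝔤) (A : E → E →L[ℝ] 𝔤) (y u v : E) : 𝔤 :=
  fderiv ℝ A y u v - fderiv ℝ A y v u + B (A y u) (A y v)

variable {B : 𝔤 →ₗ[ℝ] 𝔤 →ₗ[ℝ] 𝔤} {A : E → E →L[ℝ] 𝔤} {U : Set E} {x y : E}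

theorem gaugeCurvature_smul_left (c : ℝ) (u v : E) :
    gaugeCurvature B A y (c • u) v = c • gaugeCurvature B A y u v := by
  simp [gaugeCurvature, smul_sub]

theorem fderiv_apply_self_of_eventually_apply_self_eq_zero (hA : DifferentiableAt ℝ A y)
    (hgauge : ∀ᶠ z in 𝓝 y, A z z = 0) (v : E) : fderiv ℝ A y v y = -A y v := by
  have h_deriv : HasFDerivAt (fun z ↦ A z z) (0 : E →L[ℝ] 𝔤) y :=
    (hasFDerivAt_const (0 : 𝔤) y).congr_of_eventuallyEq hgauge
  have h_leibniz := hA.hasFDerivAt.clm_apply (hasFDerivAt_id y)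
  have h_eq := DFunLike.congr_fun (h_leibniz.unique h_deriv) v
  exact eq_neg_of_add_eq_zero_right (by simpa using h_eq)

theorem gaugeCurvature_self_left (hA : DifferentiableAt ℝ A y)
    (hgauge : ∀ᶠ z in 𝓝 y, A z z = 0) (v : E) :
    gaugeCurvature B A y y v = fderiv ℝ A y y v + A y v := by
  simp [gaugeCurvature, hgauge.self_of_nhds,
    fderiv_apply_self_of_eventually_apply_self_eq_zero hA hgauge]

theorem hasDerivAt_smul_apply_smul {s : ℝ} (hA : DifferentiableAt ℝ A (s • x)) (v : E) :
    HasDerivAt (fun t : ℝ ↦ t • A (t • x) v)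
      (fderiv ℝ A (s • x) (s • x) v + A (s • x) v) s := by
  have h_ray : HasDerivAt (fun t : ℝ ↦ t • x) x s := by
    simpa using (hasDerivAt_id s).smul_const x
  have h_form : HasDerivAt (fun t : ℝ ↦ A (t • x)) (fderiv ℝ A (s • x) x) s :=
    hA.hasFDerivAt.comp_hasDerivAt s h_ray
  have h_value : HasDerivAt (fun t : ℝ ↦ A (t • x) v) (fderiv ℝ A (s • x) x v) s := by
    simpa using h_form.clm_apply (hasDerivAt_const s v)
  simpa using (hasDerivAt_id s).fun_smul h_value

theorem continuousOn_fderiv_smul_apply_add (hU : IsOpen U) (hA : ContDiffOn ℝ 1 A U)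
    {S : Set ℝ} (hS : ∀ s ∈ S, s • x ∈ U) (v : E) :
    ContinuousOn (fun s : ℝ ↦ fderiv ℝ A (s • x) (s • x) v + A (s • x) v) S := by
  have h_ray : ContinuousOn (fun s : ℝ ↦ s • x) S := by fun_prop
  have h_fderiv := (hA.continuousOn_fderiv_of_isOpen hU le_rfl).comp h_ray hS
  have h_form := hA.continuousOn.comp h_ray hS
  exact ((h_fderiv.clm_apply h_ray).clm_apply continuousOn_const).add
    (h_form.clm_apply continuousOn_const)

theorem cronstrom_potential_formula_general [CompleteSpace 𝔤] (hU : IsOpen U)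
    (hU₀ : StarConvex ℝ 0 U) (hA : ContDiffOn ℝ 1 A U) (hgauge : ∀ y ∈ U, A y y = 0)
    (hx : x ∈ U) (v : E) :
    A x v = ∫ s in (0 : ℝ)..1, s • gaugeCurvature B A (s • x) x v := by
  have h_ray : ∀ s ∈ Set.uIcc (0 : ℝ) 1, s • x ∈ U := fun s hs ↦ by
    rw [Set.uIcc_of_le zero_le_one] at hs
    exact hU₀.smul_mem hx hs.1 hs.2
  have h_diff : ∀ y ∈ U, DifferentiableAt ℝ A y := fun y hy ↦
    (hA.differentiableOn one_ne_zero).differentiableAt (hU.mem_nhds hy)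
  have h_radial : ∀ s ∈ Set.uIcc (0 : ℝ) 1, s • gaugeCurvature B A (s • x) x v =
      fderiv ℝ A (s • x) (s • x) v + A (s • x) v := fun s hs ↦ by
    rw [← gaugeCurvature_smul_left, gaugeCurvature_self_left (h_diff _ (h_ray s hs))
      (Filter.eventually_of_mem (hU.mem_nhds (h_ray s hs)) hgauge)]
  rw [intervalIntegral.integral_congr h_radial, intervalIntegral.integral_eq_sub_of_hasDerivAt
    (fun s hs ↦ hasDerivAt_smul_apply_smul (h_diff _ (h_ray s hs)) v)
    (continuousOn_fderiv_smul_apply_add hU hA h_ray v).intervalIntegrable]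
  simp

end CoordinateFree

section Commutator

variable (R : Type*) {𝔸 : Type*} [CommSemiring R] [NonUnitalNonAssocRing 𝔸] [Module R 𝔸]
  [IsScalarTower R 𝔸 𝔸] [SMulCommClass R 𝔸 𝔸]

variable (𝔸) in
/-- The commutator of an algebra as a bilinear map, the form in which `gaugeCurvature` takes its
bracket. -/
def commutatorBilin : 𝔸 →ₗ[R] 𝔸 →ₗ[R] 𝔸 :=
  LinearMap.mul R 𝔸 - (LinearMap.mul R 𝔸).flip

theorem commutatorBilin_apply (X Y : 𝔸) : commutatorBilin R 𝔸 X Y = X * Y - Y * X := by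
  simp [commutatorBilin]

end Commutator

section Coordinates

variable {ι 𝔤 : Type*} [Fintype ι] [NormedAddCommGroup 𝔤] [NormedSpace ℝ 𝔤]

/-- The one-form `∑ a, A_a dx^a` on `ι → ℝ` with components `A_a`. -/
noncomputable def oneFormOfComponents (A : ι → (ι → ℝ) → 𝔤) (y : ι → ℝ) : (ι → ℝ) →L[ℝ] 𝔤 :=
  ∑ a, (ContinuousLinearMap.proj a : (ι → ℝ) →L[ℝ] ℝ).smulRight (A a y)

theorem oneFormOfComponents_apply (A : ι → (ι → ℝ) → 𝔤) (y v : ι → ℝ) :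
    oneFormOfComponents A y v = ∑ a, v a • A a y := by
  simp [oneFormOfComponents]

theorem oneFormOfComponents_single [DecidableEq ι] (A : ι → (ι → ℝ) → 𝔤) (y : ι → ℝ) (b : ι) :
    oneFormOfComponents A y (Pi.single b 1) = A b y := by
  simp [oneFormOfComponents_apply, Pi.single_apply]

theorem contDiff_oneFormOfComponents {A : ι → (ι → ℝ) → 𝔤} {m : WithTop ℕ∞}
    (hA : ∀ a, ContDiff ℝ m (A a)) : ContDiff ℝ m (oneFormOfComponents A) :=
  ContDiff.sum fun a _ ↦ contDiff_const.smulRight (hA a)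

theorem fderiv_oneFormOfComponents {A : ι → (ι → ℝ) → 𝔤} {y : ι → ℝ}
    (hA : ∀ a, DifferentiableAt ℝ (A a) y) (u : ι → ℝ) :
    fderiv ℝ (oneFormOfComponents A) y u =
      oneFormOfComponents (fun a z ↦ fderiv ℝ (A a) z u) y := by
  let dx (a : ι) := ContinuousLinearMap.smulRightL ℝ (ι → ℝ) 𝔤 (.proj a)
  have h_deriv : HasFDerivAt (oneFormOfComponents A)
      (∑ a, (dx a).comp (fderiv ℝ (A a) y)) y :=
    HasFDerivAt.fun_sum fun a _ ↦ (dx a).hasFDerivAt.comp y (hA a).hasFDerivAt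
  simp [h_deriv.fderiv, oneFormOfComponents, dx]

end Coordinates

theorem fderiv_apply_eq_sum_partialD {n : ℕ} (A : (Fin 4 → ℝ) → Matrix (Fin n) (Fin n) ℝ)
    (y u : Fin 4 → ℝ) : fderiv ℝ A y u = ∑ a, u a • partialD A a y := by
  conv_lhs => rw [pi_eq_sum_univ' u, map_sum]
  simp only [map_smul, partialD]

theorem gaugeCurvature_oneFormOfComponents {n : ℕ}
    {A : Fin 4 → (Fin 4 → ℝ) → Matrix (Fin n) (Fin n) ℝ} {y : Fin 4 → ℝ}
    (hA : ∀ a, DifferentiableAt ℝ (A a) y) (u : Fin 4 → ℝ) (b : Fin 4) :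
    gaugeCurvature (commutatorBilin ℝ (Matrix (Fin n) (Fin n) ℝ)) (oneFormOfComponents A) y u
      (Pi.single b 1) = ∑ a, u a • curvF A a b y := by
  have h_left : fderiv ℝ (oneFormOfComponents A) y u (Pi.single b 1) =
      ∑ a, u a • partialD (A b) a y := by
    rw [fderiv_oneFormOfComponents hA, oneFormOfComponents_single]
    exact fderiv_apply_eq_sum_partialD (A b) y u
  have h_right : fderiv ℝ (oneFormOfComponents A) y (Pi.single b 1) u =
      ∑ a, u a • partialD (A a) b y := by
    rw [fderiv_oneFormOfComponents hA, oneFormOfComponents_apply]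
    rfl
  have h_comm : commutatorBilin ℝ (Matrix (Fin n) (Fin n) ℝ) (oneFormOfComponents A y u)
      (oneFormOfComponents A y (Pi.single b 1)) =
      ∑ a, u a • (A a y * A b y - A b y * A a y) := by
    rw [oneFormOfComponents_apply, oneFormOfComponents_single, commutatorBilin_apply]
    simp only [Finset.sum_mul, Finset.mul_sum, smul_mul_assoc, mul_smul_comm, smul_sub,
      Finset.sum_sub_distrib]
  simp only [gaugeCurvature, h_left, h_right, h_comm, curvF, smul_add, smul_sub,
    Finset.sum_add_distrib, Finset.sum_sub_distrib]

/-- the Cronström potential formula: if `A` is `C¹` and satisfies the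
Cronström gauge condition `∑_a x^a A_a(x) = 0`, then
`A_b(x) = ∫₀¹ s·∑_a x^a F_{ab}(sx) ds`. -/
theorem cronstrom_potential_formula {n : ℕ}
    (A : Fin 4 → (Fin 4 → ℝ) → Matrix (Fin n) (Fin n) ℝ)
    (hA : ∀ a, ContDiff ℝ 1 (A a))
    (hCron : ∀ x : Fin 4 → ℝ, ∑ a, x a • A a x = 0)
    (x : Fin 4 → ℝ) (b : Fin 4) :
    A b x = ∫ s in (0:ℝ)..1, s • ∑ a, x a • curvF A a b (s • x) := by
  simpa only [oneFormOfComponents_single,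
      gaugeCurvature_oneFormOfComponents fun a ↦ (hA a).differentiable one_ne_zero _] using
    cronstrom_potential_formula_general (B := commutatorBilin ℝ (Matrix (Fin n) (Fin n) ℝ))
      isOpen_univ (starConvex_univ 0) (contDiff_oneFormOfComponents hA).contDiffOn
      (fun y _ ↦ (oneFormOfComponents_apply A y y).trans (hCron y)) (Set.mem_univ x) (Pi.single b 1)
end

section
/- Let n ∈ ℕ and let A_a : ℝ⁴ → M_n(ℝ), a = 0,1,2,3, be twice continuously differentiable matrix-valued functions satisfying the Cronström gauge condition ∑_{a=0}^{3} x^a A_a(x) = 0 for all x ∈ ℝ⁴. Define F_{ab} = ∂_a A_b − ∂_b A_a + [A_a, A_b] and D_c F_{ab} = ∂_c F_{ab} + [A_c, F_{ab}], raise indices with the Minkowski metric η = diag(1,−1,−1,−1), and suppose J_a : ℝ⁴ → M_n(ℝ) are continuous functions such that the field equation η^{bc} D_c F_{ab} = −J_a holds on ℝ⁴. Then the Lorentz divergence of A satisfies η^{ab} (∂_a A_b)(x) = ∫₀¹ s² ∑_{a} x^a ( [F_{ab}(sx), A^b(sx)] − J_a(sx) ) ds for all x ∈ ℝ⁴, where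 A^b = η^{bc} A_c and the index b in the bracket is summed with η. -/
open MeasureTheory

attribute [local instance] Matrix.normedAddCommGroup Matrix.normedSpace

/-- The gauge-covariant derivative `D_c F_{ab} = ∂_c F_{ab} + [A_c, F_{ab}]`. -/
noncomputable def covDF {n : ℕ} (A : Fin 4 → (Fin 4 → ℝ) → Matrix (Fin n) (Fin n) ℝ)
    (c a b : Fin 4) (x : Fin 4 → ℝ) : Matrix (Fin n) (Fin n) ℝ :=
  partialD (curvF A a b) c x + (A c x * curvF A a b x - curvF A a b x * A c x)

/-- The diagonal entries of the Minkowski metric `η = diag(1,−1,−1,−1)`. -/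
noncomputable def eta : Fin 4 → ℝ := fun i => if i = 0 then 1 else -1

/-!
Write `E f = x^a ∂_a f` for the radial (Euler) derivative, so that `∂_c (E f) = ∂_c f + E (∂_c f)`.
Differentiating the gauge condition gives `x^a F_{ab} = E A_b + A_b`, and differentiating once more
`F_{cb} + x^a ∂_c F_{ab} = 2 ∂_c A_b + E (∂_c A_b)`. Contracting with `η^{bc}` kills `F_{cb}`, and
the field equation turns the left side into the source `ρ = x^a ([F_{ab}, A^b] - J_a)`; hence
`2 div A + E (div A) = ρ`. Along the ray `s ↦ s x` this reads
`d/ds (s² (div A)(s x)) = s ρ(s x)`, to be integrated over `[0, 1]`; the factor `x^a` in `ρ(s x)`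
supplies the second power of `s`.
-/

section RadialDerivative

variable {V E : Type*} [NormedAddCommGroup V] [NormedSpace ℝ V]
  [NormedAddCommGroup E] [NormedSpace ℝ E] {f : V → E}

theorem hasDerivAt_pow_smul_comp_smul {s : ℝ} {x : V} (hf : DifferentiableAt ℝ f (s • x))
    (k : ℕ) :
    HasDerivAt (fun t : ℝ => t ^ (k + 1) • f (t • x))
      (s ^ k • ((k + 1 : ℝ) • f (s • x) + fderiv ℝ f (s • x) (s • x))) s := by
  have hray : HasDerivAt (fun t : ℝ => t • x) x s := by
    simpa using (hasDerivAt_id s).smul_const x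
  refine ((hasDerivAt_pow (k + 1) s).fun_smul
    (hf.hasFDerivAt.comp_hasDerivAt s hray)).congr_deriv ?_
  simp only [Nat.cast_add, Nat.cast_one, add_tsub_cancel_right, Function.comp_apply, map_smul]
  module

theorem integral_pow_smul_radial [CompleteSpace E] (hf : ContDiff ℝ 1 f) (k : ℕ) (x : V) :
    ∫ s in (0 : ℝ)..1, s ^ k • ((k + 1 : ℝ) • f (s • x) + fderiv ℝ f (s • x) (s • x)) = f x := by
  have hcont : Continuous fun s : ℝ =>
      s ^ k • ((k + 1 : ℝ) • f (s • x) + fderiv ℝ f (s • x) (s • x)) := by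
    have := hf.continuous
    have := hf.continuous_fderiv one_ne_zero
    fun_prop
  rw [intervalIntegral.integral_eq_sub_of_hasDerivAt
    (fun s _ => hasDerivAt_pow_smul_comp_smul (hf.differentiable one_ne_zero _) k)
    (hcont.intervalIntegrable 0 1)]
  simp

theorem fderiv_radial {y : V} (hf : ContDiffAt ℝ 2 f y) (v : V) :
    fderiv ℝ (fun z => fderiv ℝ f z z) y v
      = fderiv ℝ f y v + fderiv ℝ (fun z => fderiv ℝ f z v) y y := by
  have hd : DifferentiableAt ℝ (fderiv ℝ f) y :=
    (hf.fderiv_right (m := 1) (by norm_num)).differentiableAt one_ne_zero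
  have hsymm : IsSymmSndFDerivAt ℝ f y := hf.isSymmSndFDerivAt (by simp)
  rw [fderiv_clm_apply hd differentiableAt_fun_id,
    fderiv_clm_apply hd (differentiableAt_const v)]
  simp [hsymm v y]

end RadialDerivative

section PartialDerivative

variable {ι E : Type*} [Fintype ι] [DecidableEq ι] [NormedAddCommGroup E] [NormedSpace ℝ E]

/-- The partial derivative `∂_a f` of a function on `ℝ^ι`; `0` where `f` is not differentiable. -/
noncomputable def partialDeriv (f : (ι → ℝ) → E) (a : ι) (x : ι → ℝ) : E :=
  fderiv ℝ f x (Pi.single a 1)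

theorem contDiff_partialDeriv {m n : WithTop ℕ∞} {f : (ι → ℝ) → E} (hf : ContDiff ℝ n f)
    (hmn : m + 1 ≤ n) (a : ι) : ContDiff ℝ m (partialDeriv f a) :=
  (hf.fderiv_right hmn).clm_apply contDiff_const

theorem sum_smul_partialDeriv (f : (ι → ℝ) → E) (x v : ι → ℝ) :
    ∑ a, v a • partialDeriv f a x = fderiv ℝ f x v := by
  conv_rhs => rw [pi_eq_sum_univ' v]
  simp only [map_sum, map_smul, partialDeriv]

theorem partialDeriv_sum_coord_smul {f : ι → (ι → ℝ) → E} {x : ι → ℝ}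
    (hf : ∀ a, DifferentiableAt ℝ (f a) x) (c : ι) :
    partialDeriv (fun z => ∑ a, z a • f a z) c x
      = f c x + ∑ a, x a • partialDeriv (f a) c x := by
  have h : HasFDerivAt (fun z : ι → ℝ => ∑ a, z a • f a z) _ x :=
    HasFDerivAt.fun_sum (u := Finset.univ) fun a _ =>
      (hasFDerivAt_apply (𝕜 := ℝ) a x).fun_smul (hf a).hasFDerivAt
  rw [partialDeriv, h.fderiv]
  simp [partialDeriv, sum_apply, Finset.sum_add_distrib, Pi.single_apply, add_comm]

/-- The divergence `g^{ab} ∂_a A_b` with respect to the constant (inverse) metric `g`. -/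
noncomputable def divergence (g : Matrix ι ι ℝ) (A : ι → (ι → ℝ) → E) (x : ι → ℝ) : E :=
  ∑ a, ∑ b, g a b • partialDeriv (A b) a x

theorem contDiff_divergence {m n : WithTop ℕ∞} (g : Matrix ι ι ℝ) {A : ι → (ι → ℝ) → E}
    (hA : ∀ a, ContDiff ℝ n (A a)) (hmn : m + 1 ≤ n) : ContDiff ℝ m (divergence g A) :=
  ContDiff.sum fun a _ => ContDiff.sum fun b _ =>
    (contDiff_partialDeriv (hA b) hmn a).const_smul (g a b)

theorem fderiv_divergence (g : Matrix ι ι ℝ) {A : ι → (ι → ℝ) → E}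
    {x : ι → ℝ} (hA : ∀ a b, DifferentiableAt ℝ (partialDeriv (A b) a) x) (v : ι → ℝ) :
    fderiv ℝ (divergence g A) x v
      = ∑ a, ∑ b, g a b • fderiv ℝ (partialDeriv (A b) a) x v := by
  have h : HasFDerivAt (divergence g A) _ x :=
    HasFDerivAt.fun_sum (u := Finset.univ) fun a _ =>
      HasFDerivAt.fun_sum (u := Finset.univ) fun b _ =>
        (hA a b).hasFDerivAt.fun_const_smul (g a b)
  rw [h.fderiv]
  simp [sum_apply]

end PartialDerivative

theorem sum_sum_diagonal_smul {ι R M : Type*} [Fintype ι] [DecidableEq ι] [Semiring R]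
    [AddCommMonoid M] [Module R M] (d : ι → R) (F : ι → ι → M) :
    ∑ a, ∑ b, Matrix.diagonal d a b • F a b = ∑ a, d a • F a a := by
  simp [Matrix.diagonal_apply, ite_smul]

theorem sum_symm_smul_antisymm_eq_zero {ι R M : Type*} [Fintype ι] [Ring R] [AddCommGroup M]
    [Module R M] [IsAddTorsionFree M] {g : Matrix ι ι R} (hg : g.IsSymm) {F : ι → ι → M}
    (hF : ∀ a b, F a b = -F b a) : ∑ a, ∑ b, g a b • F a b = 0 := by
  refine self_eq_neg.1 ?_
  calc ∑ a, ∑ b, g a b • F a b = ∑ b, ∑ a, g a b • F a b := Finset.sum_comm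
    _ = ∑ b, ∑ a, -(g b a • F b a) :=
      Finset.sum_congr rfl fun b _ => Finset.sum_congr rfl fun a _ => by
        rw [hg.apply, hF a b, smul_neg]
    _ = -∑ a, ∑ b, g a b • F a b := by simp only [Finset.sum_neg_distrib]

section GaugeField

variable {ι E : Type*} [DecidableEq ι] [NormedAddCommGroup E] [NormedSpace ℝ E]

/-- The curvature `F_{ab} = ∂_a A_b - ∂_b A_a + [A_a, A_b]` of a gauge potential with values in `E`,
whose bracket is the continuous bilinear map `B`. -/
noncomputable def curvature (B : E →L[ℝ] E →L[ℝ] E) (A : ι → (ι → ℝ) → E) (a b : ι)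
    (x : ι → ℝ) : E :=
  partialDeriv (A b) a x - partialDeriv (A a) b x + B (A a x) (A b x)

/-- The gauge-covariant derivative `D_c f = ∂_c f + [A_c, f]` of a field in the adjoint
representation. -/
noncomputable def covDeriv (B : E →L[ℝ] E →L[ℝ] E) (A : ι → (ι → ℝ) → E) (c : ι)
    (f : (ι → ℝ) → E) (x : ι → ℝ) : E :=
  partialDeriv f c x + B (A c x) (f x)

variable {B : E →L[ℝ] E →L[ℝ] E} {A : ι → (ι → ℝ) → E}

theorem curvature_antisymm (hB : ∀ u v, B u v = -B v u) (a b : ι) (x : ι → ℝ) :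
    curvature B A a b x = -curvature B A b a x := by
  rw [curvature, curvature, hB (A a x)]
  abel

variable [Fintype ι]

theorem contDiff_curvature {m n : WithTop ℕ∞} (hA : ∀ a, ContDiff ℝ n (A a)) (hmn : m + 1 ≤ n)
    (a b : ι) : ContDiff ℝ m (curvature B A a b) := by
  have hA' (a : ι) : ContDiff ℝ m (A a) := (hA a).of_le (le_self_add.trans hmn)
  exact ((contDiff_partialDeriv (hA b) hmn a).sub (contDiff_partialDeriv (hA a) hmn b)).add
    ((B.contDiff.comp (hA' a)).clm_apply (hA' b))

/-- The Cronström (Fock–Schwinger) gauge condition `x^a A_a(x) = 0` centred at the origin. -/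
def IsCronstromGauge (A : ι → (ι → ℝ) → E) : Prop :=
  ∀ x, ∑ a, x a • A a x = 0

theorem IsCronstromGauge.sum_smul_curvature (hA : IsCronstromGauge A)
    {x : ι → ℝ} (hdiff : ∀ a, DifferentiableAt ℝ (A a) x) (b : ι) :
    ∑ a, x a • curvature B A a b x = fderiv ℝ (A b) x x + A b x := by
  have hderiv : A b x + ∑ a, x a • partialDeriv (A a) b x = 0 := by
    rw [← partialDeriv_sum_coord_smul hdiff, funext hA, partialDeriv]
    simp
  have hbracket : ∑ a, x a • B (A a x) (A b x) = 0 := by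
    simpa [sum_apply] using congrArg (fun u => B u (A b x)) (hA x)
  simp only [curvature, smul_add, smul_sub, Finset.sum_add_distrib, Finset.sum_sub_distrib,
    hbracket, sum_smul_partialDeriv, eq_neg_of_add_eq_zero_right hderiv]
  abel

theorem IsCronstromGauge.curvature_add_sum_smul_partialDeriv_curvature
    (hA : IsCronstromGauge A) (hA₂ : ∀ a, ContDiff ℝ 2 (A a)) (b c : ι) (x : ι → ℝ) :
    curvature B A c b x + ∑ a, x a • partialDeriv (curvature B A a b) c x
      = (2 : ℝ) • partialDeriv (A b) c x + fderiv ℝ (partialDeriv (A b) c) x x := by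
  have hdiff (a : ι) : Differentiable ℝ (A a) := (hA₂ a).differentiable two_ne_zero
  have hFdiff (a : ι) : Differentiable ℝ (curvature B A a b) :=
    (contDiff_curvature (m := 1) hA₂ (by norm_num) a b).differentiable one_ne_zero
  have hEdiff : Differentiable ℝ fun z => fderiv ℝ (A b) z z :=
    (((hA₂ b).fderiv_right (m := 1) (by norm_num)).clm_apply contDiff_id).differentiable
      one_ne_zero
  calc curvature B A c b x + ∑ a, x a • partialDeriv (curvature B A a b) c x
      = partialDeriv (fun z => ∑ a, z a • curvature B A a b z) c x :=
        (partialDeriv_sum_coord_smul (fun a => hFdiff a x) c).symm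
    _ = partialDeriv (fun z => fderiv ℝ (A b) z z + A b z) c x := by
        rw [funext fun z => hA.sum_smul_curvature (hdiff · z) b]
    _ = fderiv ℝ (fun z => fderiv ℝ (A b) z z) x (Pi.single c 1) + partialDeriv (A b) c x := by
        rw [partialDeriv, fderiv_fun_add (hEdiff x) (hdiff b x), add_apply, partialDeriv]
    _ = (2 : ℝ) • partialDeriv (A b) c x + fderiv ℝ (partialDeriv (A b) c) x x := by
        rw [fderiv_radial (hA₂ b).contDiffAt, two_smul, add_right_comm]
        rfl

theorem IsCronstromGauge.two_smul_divergence_add_fderiv (hA : IsCronstromGauge A)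
    (hA₂ : ∀ a, ContDiff ℝ 2 (A a)) (hB : ∀ u v, B u v = -B v u) {g : Matrix ι ι ℝ}
    (hg : g.IsSymm) (x : ι → ℝ) :
    (2 : ℝ) • divergence g A x + fderiv ℝ (divergence g A) x x
      = ∑ a, x a • ∑ c, ∑ b, g c b • partialDeriv (curvature B A a b) c x := by
  have : IsAddTorsionFree E := .of_isTorsionFree ℝ E
  have hdiff (c b : ι) : DifferentiableAt ℝ (partialDeriv (A b) c) x :=
    (contDiff_partialDeriv (m := 1) (hA₂ b) (by norm_num) c).differentiable one_ne_zero x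
  calc (2 : ℝ) • divergence g A x + fderiv ℝ (divergence g A) x x
      = ∑ c, ∑ b, g c b • ((2 : ℝ) • partialDeriv (A b) c x
          + fderiv ℝ (partialDeriv (A b) c) x x) := by
        simp only [fderiv_divergence g hdiff, divergence, Finset.smul_sum, smul_add,
          Finset.sum_add_distrib, smul_comm (2 : ℝ)]
    _ = ∑ c, ∑ b, g c b • curvature B A c b x
          + ∑ c, ∑ b, g c b • ∑ a, x a • partialDeriv (curvature B A a b) c x := by
        simp only [← hA.curvature_add_sum_smul_partialDeriv_curvature (B := B) hA₂, smul_add,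
          Finset.sum_add_distrib]
    _ = ∑ c, ∑ b, ∑ a, x a • g c b • partialDeriv (curvature B A a b) c x := by
        rw [sum_symm_smul_antisymm_eq_zero hg fun c b => curvature_antisymm hB c b x, zero_add]
        simp only [Finset.smul_sum, smul_comm (g _ _)]
    _ = ∑ a, x a • ∑ c, ∑ b, g c b • partialDeriv (curvature B A a b) c x := by
        simp only [Finset.smul_sum]
        rw [Finset.sum_comm_cycle]

theorem sum_smul_partialDeriv_eq_of_fieldEq (hB : ∀ u v, B u v = -B v u) {g : Matrix ι ι ℝ}
    {F : ι → (ι → ℝ) → E} {x : ι → ℝ} {j : E}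
    (hF : ∑ c, ∑ b, g c b • covDeriv B A c (F b) x = -j) :
    ∑ c, ∑ b, g c b • partialDeriv (F b) c x = ∑ c, ∑ b, g c b • B (F b x) (A c x) - j := by
  simp only [covDeriv, smul_add, Finset.sum_add_distrib, hB (A _ x), smul_neg,
    Finset.sum_neg_distrib] at hF
  rw [sub_eq_add_neg, ← hF]
  abel

theorem cronstrom_divergence_formula_general [CompleteSpace E] (hB : ∀ u v, B u v = -B v u)
    {g : Matrix ι ι ℝ} (hg : g.IsSymm) {J : ι → (ι → ℝ) → E} (hA₂ : ∀ a, ContDiff ℝ 2 (A a))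
    (hA : IsCronstromGauge A)
    (hField : ∀ a x, ∑ c, ∑ b, g c b • covDeriv B A c (curvature B A a b) x = -J a x)
    (x : ι → ℝ) :
    divergence g A x
      = ∫ s in (0 : ℝ)..1, s ^ 2 • ∑ a, x a •
          (∑ c, ∑ b, g c b • B (curvature B A a b (s • x)) (A c (s • x)) - J a (s • x)) := by
  have hradial (y : ι → ℝ) : (2 : ℝ) • divergence g A y + fderiv ℝ (divergence g A) y y
      = ∑ a, y a • (∑ c, ∑ b, g c b • B (curvature B A a b y) (A c y) - J a y) := by
    simp only [hA.two_smul_divergence_add_fderiv hA₂ hB hg y,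
      sum_smul_partialDeriv_eq_of_fieldEq hB (hField _ y)]
  rw [← integral_pow_smul_radial (contDiff_divergence (m := 1) g hA₂ (by norm_num)) 1 x]
  refine intervalIntegral.integral_congr fun s _ => ?_
  simp only [Nat.cast_one, one_add_one_eq_two, hradial, Pi.smul_apply, smul_eq_mul, mul_smul,
    ← Finset.smul_sum, pow_one, sq]

end GaugeField

/-- The commutator `[X, Y] = XY - YX` as a continuous bilinear map on real matrices. -/
noncomputable def matrixCommutator (n : ℕ) :
    Matrix (Fin n) (Fin n) ℝ →L[ℝ] Matrix (Fin n) (Fin n) ℝ →L[ℝ] Matrix (Fin n) (Fin n) ℝ :=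
  (LinearMap.mul ℝ (Matrix (Fin n) (Fin n) ℝ)
    - (LinearMap.mul ℝ (Matrix (Fin n) (Fin n) ℝ)).flip).toContinuousBilinearMap

theorem matrixCommutator_antisymm {n : ℕ} (X Y : Matrix (Fin n) (Fin n) ℝ) :
    matrixCommutator n X Y = -matrixCommutator n Y X :=
  (neg_sub _ _).symm

theorem curvF_eq_curvature {n : ℕ} (A : Fin 4 → (Fin 4 → ℝ) → Matrix (Fin n) (Fin n) ℝ)
    (a b : Fin 4) : curvF A a b = curvature (matrixCommutator n) A a b :=
  rfl

theorem covDF_eq_covDeriv {n : ℕ} (A : Fin 4 → (Fin 4 → ℝ) → Matrix (Fin n) (Fin n) ℝ)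
    (a b c : Fin 4) : covDF A c a b = covDeriv (matrixCommutator n) A c (curvF A a b) :=
  rfl

/-- the Cronström divergence formula: if `A` is `C²`, satisfies the
Cronström gauge condition `∑_a x^a A_a(x) = 0`, and the Yang–Mills field equation
`η^{bc} D_c F_{ab} = −J_a` holds, then
`η^{ab}(∂_a A_b)(x) = ∫₀¹ s²·∑_a x^a ([F_{ab}(sx), A^b(sx)] − J_a(sx)) ds`. -/
theorem cronstrom_divergence_formula {n : ℕ}
    (A : Fin 4 → (Fin 4 → ℝ) → Matrix (Fin n) (Fin n) ℝ)
    (J : Fin 4 → (Fin 4 → ℝ) → Matrix (Fin n) (Fin n) ℝ)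
    (hA : ∀ a, ContDiff ℝ 2 (A a))
    (hJ : ∀ a, Continuous (J a))
    (hCron : ∀ x : Fin 4 → ℝ, ∑ a, x a • A a x = 0)
    (hFieldEq : ∀ a, ∀ x : Fin 4 → ℝ, ∑ b, eta b • covDF A b a b x = -(J a x))
    (x : Fin 4 → ℝ) :
    ∑ a, eta a • partialD (A a) a x
      = ∫ s in (0:ℝ)..1, s^2 • ∑ a, x a •
          ((∑ b, eta b • (curvF A a b (s • x) * A b (s • x)
              - A b (s • x) * curvF A a b (s • x)))
            - J a (s • x)) := by
  have h := cronstrom_divergence_formula_general matrixCommutator_antisymm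
    (Matrix.isSymm_diagonal eta) hA hCron
    (by simpa only [sum_sum_diagonal_smul, covDF_eq_covDeriv, curvF_eq_curvature] using hFieldEq) x
  simp only [divergence, sum_sum_diagonal_smul] at h
  exact h
end

section
/- Let d ∈ ℕ, t₀ > 0, E ≥ 0, λ > 0, and let φ : ℝ × ℝ³ → ℝ^d be continuously differentiable. Suppose that for every t ∈ [−t₀, 0], ∫_{B(0,t₀)} |∂_tφ(t,x)|² dx ≤ E, and additionally that (λ/4)·∫_{B(0,t₀)} |φ(−t₀,x)|⁴ dx ≤ E, where B(0,t₀) ⊂ ℝ³ is the ball of radius t₀ about the origin. Then ( ∫_{B(0,t₀)} |φ(−|x|, x)|² dx )^{1/2} ≤ (4E/λ)^{1/4}·((4/3)·π·t₀³)^{1/4} + 2·√E·t₀. -/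
open MeasureTheory

/-!
Along the time line through `x` the fundamental theorem of calculus bounds `|φ(-|x|, x)|` by
`|φ(-t₀, x)| + ∫ |∂ₜφ(s, x)| ds` over `s ∈ [-t₀, 0]`. The triangle inequality in `L²` of the ball
splits this into two norms. Hölder's inequality bounds the first by the `L⁴` norm of `φ(-t₀, ·)`
times `vol(B)^{1/4}`. For the second, Cauchy–Schwarz in time and Tonelli's theorem give the bound
`t₀ · sup_t ‖∂ₜφ(t, ·)‖_{L²} ≤ t₀ √E`.
-/

open scoped ENNReal

section LebesgueNorms

variable {α β : Type*} [MeasurableSpace α] [MeasurableSpace β] {μ : Measure α} {ν : Measure β}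

theorem rpow_lintegral_le_measure_univ_rpow_mul_lintegral_rpow {r : ℝ} (hr : 1 ≤ r)
    {f : β → ℝ≥0∞} (hf : AEMeasurable f ν) :
    (∫⁻ s, f s ∂ν) ^ r ≤ ν Set.univ ^ (r - 1) * ∫⁻ s, f s ^ r ∂ν := by
  have hr₀ : 0 < r := zero_lt_one.trans_le hr
  have holder :
      ∫⁻ s, f s ∂ν ≤ (∫⁻ s, f s ^ r ∂ν) ^ (1 / r) * ν Set.univ ^ (1 - 1 / r) := by
    simpa [eLpNorm'_eq_lintegral_enorm] using
      eLpNorm'_le_eLpNorm'_mul_rpow_measure_univ one_pos hr hf.aestronglyMeasurable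
  calc (∫⁻ s, f s ∂ν) ^ r
      ≤ ((∫⁻ s, f s ^ r ∂ν) ^ (1 / r) * ν Set.univ ^ (1 - 1 / r)) ^ r := by gcongr
    _ = ν Set.univ ^ (r - 1) * ∫⁻ s, f s ^ r ∂ν := by
      rw [ENNReal.mul_rpow_of_nonneg _ _ hr₀.le, ← ENNReal.rpow_mul, ← ENNReal.rpow_mul,
        one_div_mul_cancel hr₀.ne', sub_mul, one_div_mul_cancel hr₀.ne', one_mul,
        ENNReal.rpow_one, mul_comm]

theorem eLpNorm_lintegral_le_measure_univ_mul [SFinite μ] [SFinite ν] {p : ℝ≥0∞} (hp : 1 ≤ p)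
    (hp_top : p ≠ ∞) {f : α → β → ℝ≥0∞} (hf : AEMeasurable (Function.uncurry f) (μ.prod ν))
    {C : ℝ≥0∞} (hC : ∀ᵐ s ∂ν, eLpNorm (fun x => f x s) p μ ≤ C) :
    eLpNorm (fun x => ∫⁻ s, f x s ∂ν) p μ ≤ ν Set.univ * C := by
  have hp₀ : p ≠ 0 := (zero_lt_one.trans_le hp).ne'
  have hr : 1 ≤ p.toReal := by simpa using ENNReal.toReal_mono hp_top hp
  set r := p.toReal
  have hr₀ : 0 < r := zero_lt_one.trans_le hr
  have eLpNorm_le_iff (g : α → ℝ≥0∞) (D : ℝ≥0∞) :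
      eLpNorm g p μ ≤ D ↔ ∫⁻ x, g x ^ r ∂μ ≤ D ^ r := by
    rw [eLpNorm_eq_lintegral_rpow_enorm_toReal hp₀ hp_top, one_div, ENNReal.rpow_inv_le_iff hr₀]
    rfl
  simp only [eLpNorm_le_iff] at hC ⊢
  calc ∫⁻ x, (∫⁻ s, f x s ∂ν) ^ r ∂μ
      ≤ ∫⁻ x, ν Set.univ ^ (r - 1) * ∫⁻ s, f x s ^ r ∂ν ∂μ := by
        refine lintegral_mono_ae ?_
        filter_upwards [hf.aestronglyMeasurable.prodMk_left] with x hx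
        exact rpow_lintegral_le_measure_univ_rpow_mul_lintegral_rpow hr hx.aemeasurable
    _ = ν Set.univ ^ (r - 1) * ∫⁻ s, ∫⁻ x, f x s ^ r ∂μ ∂ν := by
        rw [← lintegral_lintegral_swap (hf.pow_const r)]
        exact lintegral_const_mul'' _ (hf.pow_const r).lintegral_prod_right'
    _ ≤ ν Set.univ ^ (r - 1) * ∫⁻ _, C ^ r ∂ν := by
        gcongr _ * ?_
        exact lintegral_mono_ae hC
    _ = (ν Set.univ * C) ^ r := by
        have hpow : ν Set.univ ^ r = ν Set.univ ^ (r - 1) * ν Set.univ := by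
          simpa using ENNReal.rpow_add_of_nonneg (x := ν Set.univ) _ _ (sub_nonneg.2 hr) zero_le_one
        rw [lintegral_const, ENNReal.mul_rpow_of_nonneg _ _ hr₀.le, hpow, mul_comm (C ^ r),
          mul_assoc]

variable {F : Type*} [NormedAddCommGroup F] {f : α → F}

theorem eLpNorm_natCast_eq_ofReal_integral_norm_pow {n : ℕ} (hn : n ≠ 0)
    (hf : MemLp f n μ) :
    eLpNorm f n μ = ENNReal.ofReal ((∫ x, ‖f x‖ ^ n ∂μ) ^ (1 / n : ℝ)) := by
  simpa using hf.eLpNorm_eq_integral_rpow_norm (by simpa) (by simp)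

theorem eLpNorm_natCast_le_ofReal_rpow {n : ℕ} (hn : n ≠ 0) (hf : MemLp f n μ) {A : ℝ}
    (hA : ∫ x, ‖f x‖ ^ n ∂μ ≤ A) : eLpNorm f n μ ≤ ENNReal.ofReal (A ^ (1 / n : ℝ)) := by
  rw [eLpNorm_natCast_eq_ofReal_integral_norm_pow hn hf]
  gcongr

theorem eLpNorm_natCast_le_ofReal_rpow_mul_measure_univ_rpow [IsFiniteMeasure μ] {m n : ℕ}
    (hm : m ≠ 0) (hmn : m ≤ n) (hf : MemLp f n μ) {A : ℝ} (hA : ∫ x, ‖f x‖ ^ n ∂μ ≤ A) :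
    eLpNorm f m μ
      ≤ ENNReal.ofReal (A ^ (1 / n : ℝ) * μ.real Set.univ ^ (1 / m - 1 / n : ℝ)) := by
  have hA₀ : 0 ≤ A := (integral_nonneg fun x => by positivity).trans hA
  have hexp : 0 ≤ (1 / m - 1 / n : ℝ) :=
    sub_nonneg.2 (one_div_le_one_div_of_le (by positivity) (by exact_mod_cast hmn))
  calc eLpNorm f m μ
      ≤ eLpNorm f n μ * μ Set.univ ^ (1 / m - 1 / n : ℝ) := by
        simpa using eLpNorm_le_eLpNorm_mul_rpow_measure_univ (p := m) (q := n)
          (by exact_mod_cast hmn) hf.aestronglyMeasurable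
    _ ≤ ENNReal.ofReal (A ^ (1 / n : ℝ)) * μ Set.univ ^ (1 / m - 1 / n : ℝ) := by
        gcongr
        exact eLpNorm_natCast_le_ofReal_rpow (by omega) hf hA
    _ = ENNReal.ofReal (A ^ (1 / n : ℝ) * μ.real Set.univ ^ (1 / m - 1 / n : ℝ)) := by
        rw [ENNReal.ofReal_mul (by positivity),
          ← ENNReal.ofReal_rpow_of_nonneg measureReal_nonneg hexp, ofReal_measureReal]

theorem memLp_restrict_of_continuous_of_isBounded {X : Type*} [PseudoMetricSpace X]
    [ProperSpace X] [MeasurableSpace X] [OpensMeasurableSpace X] {μ : Measure X}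
    [IsFiniteMeasureOnCompacts μ] {f : X → F} (hf : Continuous f) {S : Set X}
    (hS : Bornology.IsBounded S) (p : ℝ≥0∞) : MemLp f p (μ.restrict S) := by
  have hK : IsCompact (closure S) := hS.isCompact_closure
  obtain ⟨C, hC⟩ := hK.exists_bound_of_continuousOn hf.continuousOn
  have : IsFiniteMeasure (μ.restrict (closure S)) :=
    isFiniteMeasure_restrict.2 hK.measure_lt_top.ne
  have hfK : MemLp f p (μ.restrict (closure S)) :=
    .of_bound hf.aestronglyMeasurable C
      (ae_restrict_of_forall_mem isClosed_closure.measurableSet hC)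
  exact hfK.mono_measure (Measure.restrict_mono subset_closure le_rfl)

end LebesgueNorms

section TimeDerivative

variable {X F : Type*} [NormedAddCommGroup F] [NormedSpace ℝ F] {φ : ℝ × X → F}

/-- The time derivative `∂ₜφ` of a field `φ` on the spacetime `ℝ × X`, with the time coordinate
first. In temporal gauge it is the momentum `π = D₀φ`. It is `0` wherever `φ` is not differentiable
in time. -/
noncomputable def timeDeriv (φ : ℝ × X → F) (q : ℝ × X) : F :=
  deriv (fun s => φ (s, q.2)) q.1

theorem continuous_timeDeriv_of_contDiff [NormedAddCommGroup X] [NormedSpace ℝ X]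
    (hφ : ContDiff ℝ 1 φ) : Continuous (timeDeriv φ) := by
  have h : timeDeriv φ = fun q => fderiv ℝ φ q (1, 0) := by
    funext q
    have hline : HasDerivAt (fun s : ℝ => (s, q.2)) ((1 : ℝ), (0 : X)) q.1 :=
      (hasDerivAt_id q.1).prodMk (hasDerivAt_const q.1 q.2)
    exact ((hφ.differentiable one_ne_zero q).hasFDerivAt.comp_hasDerivAt q.1 hline).deriv
  rw [h]
  exact (hφ.continuous_fderiv one_ne_zero).clm_apply continuous_const

theorem enorm_le_enorm_add_lintegral_enorm_deriv {f : ℝ → F} {a b t : ℝ} (ht : t ∈ Set.Icc a b)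
    (hf : ContDiffOn ℝ 1 f (Set.Icc a b)) :
    ‖f t‖ₑ ≤ ‖f a‖ₑ + ∫⁻ s in Set.Icc a b, ‖deriv f s‖ₑ := by
  have hsub : Set.Icc a t ⊆ Set.Icc a b := Set.Icc_subset_Icc_right ht.2
  calc ‖f t‖ₑ = ‖f a + (f t - f a)‖ₑ := by rw [add_sub_cancel]
    _ ≤ ‖f a‖ₑ + ‖f t - f a‖ₑ := enorm_add_le _ _
    _ ≤ ‖f a‖ₑ + ∫⁻ s in Set.Icc a b, ‖deriv f s‖ₑ := by
      gcongr
      exact (enorm_sub_le_lintegral_deriv_of_contDiffOn_Icc (hf.mono hsub) ht.1).trans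
        (lintegral_mono_set hsub)

theorem eLpNorm_graph_le_eLpNorm_add_mul [MeasurableSpace X] {μ : Measure X} [SFinite μ]
    {p : ℝ≥0∞} (hp : 1 ≤ p) (hp_top : p ≠ ∞) {a b : ℝ} {τ : X → ℝ}
    (hτ : ∀ᵐ x ∂μ, τ x ∈ Set.Icc a b)
    (hφ : ∀ x, ContDiffOn ℝ 1 (fun s => φ (s, x)) (Set.Icc a b))
    (ha : AEStronglyMeasurable (fun x => φ (a, x)) μ)
    (hderiv : AEStronglyMeasurable (fun q : X × ℝ => timeDeriv φ q.swap)
      (μ.prod (volume.restrict (Set.Icc a b))))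
    {C : ℝ≥0∞} (hC : ∀ t ∈ Set.Icc a b, eLpNorm (fun x => timeDeriv φ (t, x)) p μ ≤ C) :
    eLpNorm (fun x => φ (τ x, x)) p μ
      ≤ eLpNorm (fun x => φ (a, x)) p μ + ENNReal.ofReal (b - a) * C := by
  let arc (x : X) : ℝ≥0∞ := ∫⁻ s in Set.Icc a b, ‖timeDeriv φ (s, x)‖ₑ
  have arc_meas : AEMeasurable arc μ := hderiv.enorm.lintegral_prod_right'
  have arc_le : eLpNorm arc p μ ≤ ENNReal.ofReal (b - a) * C := by
    rw [← Real.volume_Icc, ← Measure.restrict_apply_univ]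
    refine eLpNorm_lintegral_le_measure_univ_mul hp hp_top hderiv.enorm ?_
    refine ae_restrict_of_forall_mem measurableSet_Icc fun t ht => ?_
    exact (eLpNorm_enorm _).trans_le (hC t ht)
  calc eLpNorm (fun x => φ (τ x, x)) p μ
      ≤ eLpNorm ((fun x => ‖φ (a, x)‖ₑ) + arc) p μ := by
        refine eLpNorm_mono_enorm_ae ?_
        filter_upwards [hτ] with x hx
        exact enorm_le_enorm_add_lintegral_enorm_deriv hx (hφ x)
    _ ≤ eLpNorm (fun x => ‖φ (a, x)‖ₑ) p μ + eLpNorm arc p μ :=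
        eLpNorm_add_le ha.enorm.aestronglyMeasurable arc_meas.aestronglyMeasurable hp
    _ ≤ eLpNorm (fun x => φ (a, x)) p μ + ENNReal.ofReal (b - a) * C := by
        rw [eLpNorm_enorm]
        gcongr

end TimeDerivative

section Cone

variable {X F : Type*} [SeminormedAddCommGroup X] [ProperSpace X] [MeasurableSpace X]
  [OpensMeasurableSpace X] {μ : Measure X} [IsFiniteMeasureOnCompacts μ]
  [NormedAddCommGroup F] [NormedSpace ℝ F] {φ : ℝ × X → F} {t₀ : ℝ}

theorem eLpNorm_cone_le_eLpNorm_add_mul {p : ℝ≥0∞} (hp : 1 ≤ p) (hp_top : p ≠ ∞)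
    (hφ : Continuous φ) (hdiff : ∀ x, Differentiable ℝ fun s => φ (s, x))
    (hderiv : Continuous (timeDeriv φ)) {C : ℝ≥0∞}
    (hC : ∀ t ∈ Set.Icc (-t₀) 0,
      eLpNorm (fun x => timeDeriv φ (t, x)) p (μ.restrict (Metric.ball 0 t₀)) ≤ C) :
    eLpNorm (fun x => φ (-‖x‖, x)) p (μ.restrict (Metric.ball 0 t₀))
      ≤ eLpNorm (fun x => φ (-t₀, x)) p (μ.restrict (Metric.ball 0 t₀))
        + ENNReal.ofReal t₀ * C := by
  have : IsFiniteMeasure (μ.restrict (Metric.ball 0 t₀)) :=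
    isFiniteMeasure_restrict.2 Metric.isBounded_ball.measure_lt_top.ne
  have cone_mem : ∀ᵐ x ∂μ.restrict (Metric.ball 0 t₀), -‖x‖ ∈ Set.Icc (-t₀) 0 :=
    ae_restrict_of_forall_mem measurableSet_ball fun x hx => by
      simpa using (mem_ball_zero_iff.1 hx).le
  have hC1 (x : X) : ContDiff ℝ 1 fun s => φ (s, x) :=
    contDiff_one_iff_deriv.2
      ⟨hdiff x, hderiv.comp (by fun_prop : Continuous fun s : ℝ => (s, x))⟩
  simpa using eLpNorm_graph_le_eLpNorm_add_mul hp hp_top cone_mem (fun x => (hC1 x).contDiffOn)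
    (by fun_prop) (by fun_prop) hC

theorem cone_L2_bound_quartic_general {E lam : ℝ} (ht₀ : 0 ≤ t₀) (hlam : 0 < lam)
    (hφ : Continuous φ) (hdiff : ∀ x, Differentiable ℝ fun s => φ (s, x))
    (hderiv : Continuous (timeDeriv φ))
    (hen : ∀ t ∈ Set.Icc (-t₀) 0, ∫ x in Metric.ball 0 t₀, ‖timeDeriv φ (t, x)‖ ^ 2 ∂μ ≤ E)
    (hquart : lam / 4 * ∫ x in Metric.ball 0 t₀, ‖φ (-t₀, x)‖ ^ 4 ∂μ ≤ E) :
    √(∫ x in Metric.ball 0 t₀, ‖φ (-‖x‖, x)‖ ^ 2 ∂μ)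
      ≤ (4 * E / lam) ^ (1 / 4 : ℝ) * μ.real (Metric.ball 0 t₀) ^ (1 / 4 : ℝ) + √E * t₀ := by
  set ν := μ.restrict (Metric.ball 0 t₀)
  have : IsFiniteMeasure ν := isFiniteMeasure_restrict.2 Metric.isBounded_ball.measure_lt_top.ne
  have memLp {f : X → F} (hf : Continuous f) (n : ℕ) : MemLp f n ν :=
    memLp_restrict_of_continuous_of_isBounded hf Metric.isBounded_ball n
  have quartic_le : ∫ x, ‖φ (-t₀, x)‖ ^ 4 ∂ν ≤ 4 * E / lam := by
    rw [le_div_iff₀ hlam]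
    linarith
  have hA : 0 ≤ 4 * E / lam := (integral_nonneg fun x => by positivity).trans quartic_le
  have initial_le : eLpNorm (fun x => φ (-t₀, x)) 2 ν
      ≤ ENNReal.ofReal ((4 * E / lam) ^ (1 / 4 : ℝ) * ν.real Set.univ ^ (1 / 4 : ℝ)) := by
    have hexp : (1 / 2 - 1 / 4 : ℝ) = 1 / 4 := by norm_num
    simpa only [Nat.cast_ofNat, hexp] using
      eLpNorm_natCast_le_ofReal_rpow_mul_measure_univ_rpow two_ne_zero (by norm_num)
        (memLp (by fun_prop) 4) quartic_le
  have slice_le (t : ℝ) (ht : t ∈ Set.Icc (-t₀) 0) :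
      eLpNorm (fun x => timeDeriv φ (t, x)) 2 ν ≤ ENNReal.ofReal √E := by
    simpa [Real.sqrt_eq_rpow] using
      eLpNorm_natCast_le_ofReal_rpow two_ne_zero (memLp (by fun_prop) 2) (hen t ht)
  have cone_eq : eLpNorm (fun x => φ (-‖x‖, x)) 2 ν
      = ENNReal.ofReal √(∫ x, ‖φ (-‖x‖, x)‖ ^ 2 ∂ν) := by
    simpa [Real.sqrt_eq_rpow] using
      eLpNorm_natCast_eq_ofReal_integral_norm_pow two_ne_zero (memLp (by fun_prop) 2)
  rw [← measureReal_restrict_apply_univ, ← ENNReal.ofReal_le_ofReal_iff (by positivity),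
    ENNReal.ofReal_add (by positivity) (by positivity), mul_comm √E, ENNReal.ofReal_mul ht₀,
    ← cone_eq]
  calc eLpNorm (fun x => φ (-‖x‖, x)) 2 ν
      ≤ eLpNorm (fun x => φ (-t₀, x)) 2 ν + ENNReal.ofReal t₀ * ENNReal.ofReal √E :=
        eLpNorm_cone_le_eLpNorm_add_mul one_le_two (by simp) hφ hdiff hderiv slice_le
    _ ≤ ENNReal.ofReal ((4 * E / lam) ^ (1 / 4 : ℝ) * ν.real Set.univ ^ (1 / 4 : ℝ))
        + ENNReal.ofReal t₀ * ENNReal.ofReal √E := by gcongr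

end Cone

theorem volume_real_ball_fin_three (x : EuclideanSpace ℝ (Fin 3)) {r : ℝ} (hr : 0 ≤ r) :
    volume.real (Metric.ball x r) = 4 / 3 * Real.pi * r ^ 3 := by
  rw [measureReal_def, EuclideanSpace.volume_ball_fin_three, ENNReal.toReal_mul,
    ENNReal.toReal_pow, ENNReal.toReal_ofReal hr, ENNReal.toReal_ofReal (by positivity)]
  ring

/-- Lemma A.1 (second bound, case `λ ≠ 0`): if additionally the
quartic energy `(λ/4)·∫_{B(0,t₀)} |φ(−t₀,x)|⁴ dx` is bounded by `E`, then the `L²`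
norm of `φ` on the backward lightcone surface is bounded by
`(4E/λ)^{1/4}·((4/3)πt₀³)^{1/4} + 2·√E·t₀`. -/
theorem cone_L2_bound_quartic (d : ℕ) (t₀ E lam : ℝ) (ht₀ : 0 < t₀) (hE : 0 ≤ E)
    (hlam : 0 < lam)
    (φ : ℝ × EuclideanSpace ℝ (Fin 3) → EuclideanSpace ℝ (Fin d))
    (hφ : ContDiff ℝ 1 φ)
    (hen : ∀ t ∈ Set.Icc (-t₀) (0 : ℝ),
      (∫ x in Metric.ball (0 : EuclideanSpace ℝ (Fin 3)) t₀,
        ‖deriv (fun s : ℝ => φ (s, x)) t‖^2) ≤ E)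
    (hquart : (lam / 4) * (∫ x in Metric.ball (0 : EuclideanSpace ℝ (Fin 3)) t₀,
        ‖φ (-t₀, x)‖^4) ≤ E) :
    Real.sqrt (∫ x in Metric.ball (0 : EuclideanSpace ℝ (Fin 3)) t₀, ‖φ (-‖x‖, x)‖^2)
      ≤ (4 * E / lam) ^ ((1:ℝ)/4) * ((4/3) * Real.pi * t₀^3) ^ ((1:ℝ)/4)
        + 2 * Real.sqrt E * t₀ := by
  have hdiff (x : EuclideanSpace ℝ (Fin 3)) : Differentiable ℝ fun s => φ (s, x) :=
    (hφ.differentiable one_ne_zero).comp (by fun_prop : Differentiable ℝ fun s : ℝ => (s, x))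
  have sharp := cone_L2_bound_quartic_general ht₀.le hlam hφ.continuous hdiff
    (continuous_timeDeriv_of_contDiff hφ) hen hquart
  rw [volume_real_ball_fin_three 0 ht₀.le] at sharp
  have : 0 ≤ √E * t₀ := by positivity
  linarith
end
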